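/- arXiv:2207.06693 — 2 statements merged into one kernel-verified Lean document; each statement's English description precedes it below -/
import Mathlib

section
/- For d × d complex matrices: the infimum of ‖A‖_{S_{2p}} · ‖X‖_∞ · ‖B‖_{S_{2p}} over all factorizations T = A X B (A, B, X ∈ M_d(ℂ)) equals the Schatten p-norm ‖T‖_{S_p}, for any 1 ≤ p < ∞. -/
open Matrix
open scoped ComplexOrder

/-- Operator (spectral) norm of a rectangular complex matrix. -/
noncomputable def opN {α β : Type*} [Fintype α] [Fintype β] [DecidableEq β]
    (M : Matrix α β ℂ) : ℝ :=
  ‖LinearMap.toContinuousLinearMap (Matrix.toEuclideanLin M)‖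

/-- Schatten `p`-norm of a square complex matrix: `(∑ singular values ^ p)^{1/p}`. -/
noncomputable def sNorm {n : Type*} [Fintype n] [DecidableEq n] (p : ℝ)
    (M : Matrix n n ℂ) : ℝ :=
  (∑ i, ((Matrix.posSemidef_conjTranspose_mul_self M).1.eigenvalues i) ^ (p / 2)) ^ (1 / p)

/-! Let `T = A * X * B` have singular value decomposition `T = U * diagonal σ * Vᴴ`. Then
`σ i = ⟪(Aᴴ * U)ᵢ, X (B * V)ᵢ⟫ ≤ ‖X‖ * ‖(Aᴴ * U)ᵢ‖ * ‖(B * V)ᵢ‖`, where the index `i` selects a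
column, and Hölder's inequality for sums reduces the lower bound to column norms. For a unitary `V`
the squared column norms of `B * V` are the image of the squared singular values of `B` under a
doubly stochastic matrix `(|W i j|²)`. Jensen's inequality for the power `t / 2`, convex because
`2 ≤ t`, therefore bounds the `ℓᵗ` norm of the column norms by the Schatten `t`-norm of `B`;
likewise for `A` and `s`. As `1/s + 1/t = 1/r`, the Schatten `r`-norm of `T` is attained by
`A = U * σ^(r/s)`, `X = 1`, `B = σ^(r/t) * Vᴴ`. -/

/-- The singular values of a complex or real matrix `M`, in the order in which Mathlib lists the
eigenvalues of `Mᴴ * M`. They are the coordinates in which Schatten norms are computed. -/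
noncomputable def singularValue {𝕜 m n : Type*} [RCLike 𝕜] [Fintype m] [Fintype n] [DecidableEq n]
    (M : Matrix m n 𝕜) (i : n) : ℝ :=
  √((posSemidef_conjTranspose_mul_self M).1.eigenvalues i)

lemma Lr_le_Lp_mul_Lq_of_nonneg {ι : Type*} (S : Finset ι) {f g : ι → ℝ} {p q r : ℝ}
    (hpqr : p.HolderTriple q r) (hf : ∀ i ∈ S, 0 ≤ f i) (hg : ∀ i ∈ S, 0 ≤ g i) :
    (∑ i ∈ S, (f i * g i) ^ r) ^ (1 / r) ≤
      (∑ i ∈ S, f i ^ p) ^ (1 / p) * (∑ i ∈ S, g i ^ q) ^ (1 / q) := by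
  have hr : 0 < r := hpqr.pos'
  have hF : 0 ≤ ∑ i ∈ S, f i ^ p := Finset.sum_nonneg fun i hi => Real.rpow_nonneg (hf i hi) p
  have hG : 0 ≤ ∑ i ∈ S, g i ^ q := Finset.sum_nonneg fun i hi => Real.rpow_nonneg (hg i hi) q
  have hFG : 0 ≤ ∑ i ∈ S, (f i * g i) ^ r :=
    Finset.sum_nonneg fun i hi => Real.rpow_nonneg (mul_nonneg (hf i hi) (hg i hi)) r
  have div_mul_one_div (x : ℝ) : r / x * (1 / r) = 1 / x := by field_simp
  calc (∑ i ∈ S, (f i * g i) ^ r) ^ (1 / r)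
      ≤ ((∑ i ∈ S, f i ^ p) ^ (r / p) * (∑ i ∈ S, g i ^ q) ^ (r / q)) ^ (1 / r) := by
        gcongr
        exact Real.Lr_rpow_le_Lp_mul_Lq_of_nonneg S hpqr hf hg
    _ = (∑ i ∈ S, f i ^ p) ^ (1 / p) * (∑ i ∈ S, g i ^ q) ^ (1 / q) := by
        rw [Real.mul_rpow (by positivity) (by positivity), ← Real.rpow_mul hF, ← Real.rpow_mul hG,
          div_mul_one_div, div_mul_one_div]

lemma sum_convexOn_mulVec_le {R n : Type*} [Fintype n] [DecidableEq n] [Field R] [LinearOrder R]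
    [IsStrictOrderedRing R] {D : Matrix n n R} (hD : D ∈ doublyStochastic R n) {S : Set R}
    {f : R → R} (hf : ConvexOn R S f) {x : n → R} (hx : ∀ i, x i ∈ S) :
    ∑ i, f ((D *ᵥ x) i) ≤ ∑ i, f (x i) :=
  calc ∑ i, f ((D *ᵥ x) i) ≤ ∑ i, (D *ᵥ (f ∘ x)) i :=
        Finset.sum_le_sum fun i _ => hf.map_sum_le (fun _ _ => nonneg_of_mem_doublyStochastic hD)
          (sum_row_of_mem_doublyStochastic hD i) fun j _ => hx j
    _ = ∑ i, f (x i) := sum_mulVec_of_mem_doublyStochastic hD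

lemma exists_orthonormalBasis_norm_smul_eq {𝕜 E ι : Type*} [RCLike 𝕜] [NormedAddCommGroup E]
    [InnerProductSpace 𝕜 E] [FiniteDimensional 𝕜 E] [Fintype ι]
    (hcard : Module.finrank 𝕜 E = Fintype.card ι) {w : ι → E}
    (hw : Pairwise fun i j => inner 𝕜 (w i) (w j) = 0) :
    ∃ b : OrthonormalBasis ι 𝕜 E, ∀ i, w i = (‖w i‖ : 𝕜) • b i := by
  let e := Fintype.equivFin ι
  have hwe : Pairwise fun k l => inner 𝕜 ((w ∘ e.symm) k) ((w ∘ e.symm) l) = 0 :=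
    fun k l hkl => hw (e.symm.injective.ne hkl)
  have hcard' : Module.finrank 𝕜 E = Fintype.card (Fin (Fintype.card ι)) := by simpa using hcard
  refine ⟨(InnerProductSpace.gramSchmidtOrthonormalBasis hcard' (w ∘ e.symm)).reindex e.symm,
    fun i => ?_⟩
  rw [OrthonormalBasis.reindex_apply, Equiv.symm_symm]
  by_cases hi : w i = 0
  · simp [hi]
  · have hwi : (w ∘ e.symm) (e i) ≠ 0 := by simpa using hi
    rw [InnerProductSpace.gramSchmidtOrthonormalBasis_apply_of_orthogonal hcard' hwe hwi,
      Function.comp_apply, Equiv.symm_apply_apply, smul_smul, mul_inv_cancel₀ (by simpa using hi),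
      one_smul]

section

variable {𝕜 m n : Type*} [RCLike 𝕜] [Fintype m] [Fintype n] [DecidableEq n]

lemma inner_toLp_col {k l : Type*} (A : Matrix m k 𝕜) (B : Matrix m l 𝕜) (i : k) (j : l) :
    inner 𝕜 (WithLp.toLp 2 (A.col i)) (WithLp.toLp 2 (B.col j)) = (Aᴴ * B) i j := by
  rw [EuclideanSpace.inner_toLp_toLp, dotProduct_comm]
  rfl

lemma sq_norm_toLp_col {k : Type*} (A : Matrix m k 𝕜) (i : k) :
    ‖WithLp.toLp 2 (A.col i)‖ ^ 2 = RCLike.re ((Aᴴ * A) i i) := by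
  rw [@norm_sq_eq_re_inner 𝕜, inner_toLp_col]

lemma of_sq_norm_mem_doublyStochastic {U : Matrix n n 𝕜} (hU : U ∈ unitaryGroup n 𝕜) :
    of (fun i j => ‖U i j‖ ^ 2) ∈ doublyStochastic ℝ n := by
  refine mem_doublyStochastic_iff_sum.2 ⟨fun i j => by simp, fun i => ?_, fun j => ?_⟩
  · have hrow := congrFun₂ (mem_unitaryGroup_iff.1 hU) i i
    simp only [mul_apply, star_apply, RCLike.star_def, RCLike.mul_conj, one_apply_eq] at hrow
    exact_mod_cast hrow
  · have hcol := congrFun₂ (mem_unitaryGroup_iff'.1 hU) j j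
    simp only [mul_apply, star_apply, RCLike.star_def, RCLike.conj_mul, one_apply_eq] at hcol
    exact_mod_cast hcol

lemma re_mul_diagonal_mul_conjTranspose_apply_self {k : Type*} (U : Matrix k n 𝕜)
    (a : n → ℝ) (i : k) :
    RCLike.re ((U * diagonal (fun j => (a j : 𝕜)) * Uᴴ) i i) =
      (of (fun i j => ‖U i j‖ ^ 2) *ᵥ a) i := by
  have hsum : (U * diagonal (fun j => (a j : 𝕜)) * Uᴴ) i i =
      ((∑ j, ‖U i j‖ ^ 2 * a j : ℝ) : 𝕜) := by
    simp only [mul_apply (N := Uᴴ), mul_diagonal, conjTranspose_apply, RCLike.star_def,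
      mul_right_comm _ _ (starRingEnd 𝕜 _), RCLike.mul_conj]
    push_cast
    rfl
  rw [hsum, RCLike.ofReal_re]
  rfl

lemma exists_unitary_mul_diagonal_eigenvalues {H : Matrix n n 𝕜} (hH : H.IsHermitian) :
    ∃ V ∈ unitaryGroup n 𝕜, V * diagonal (fun i => (hH.eigenvalues i : 𝕜)) * Vᴴ = H :=
  ⟨hH.eigenvectorUnitary, hH.eigenvectorUnitary.2, hH.spectral_theorem.symm⟩

lemma sum_convexOn_diag_conj_le {H U : Matrix n n 𝕜} (hH : H.IsHermitian)
    (hU : U ∈ unitaryGroup n 𝕜) {S : Set ℝ} {f : ℝ → ℝ} (hf : ConvexOn ℝ S f)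
    (hS : ∀ i, hH.eigenvalues i ∈ S) :
    ∑ i, f (RCLike.re ((Uᴴ * H * U) i i)) ≤ ∑ i, f (hH.eigenvalues i) := by
  obtain ⟨W, hW, hWH⟩ := exists_unitary_mul_diagonal_eigenvalues hH
  have hconj : Uᴴ * H * U =
      (Uᴴ * W) * diagonal (fun i => (hH.eigenvalues i : 𝕜)) * (Uᴴ * W)ᴴ :=
    calc Uᴴ * H * U = Uᴴ * (W * diagonal (fun i => (hH.eigenvalues i : 𝕜)) * Wᴴ) * U := by rw [hWH]
      _ = (Uᴴ * W) * diagonal (fun i => (hH.eigenvalues i : 𝕜)) * (Uᴴ * W)ᴴ := by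
        simp only [conjTranspose_mul, conjTranspose_conjTranspose, Matrix.mul_assoc]
  have hUW : Uᴴ * W ∈ unitaryGroup n 𝕜 := mul_mem (Unitary.star_mem hU) hW
  simp only [hconj, re_mul_diagonal_mul_conjTranspose_apply_self]
  exact sum_convexOn_mulVec_le (of_sq_norm_mem_doublyStochastic hUW) hf hS

lemma map_eigenvalues_eq_of_eq_mul_diagonal_mul {H V : Matrix n n 𝕜} (hH : H.IsHermitian)
    (hV : V ∈ unitaryGroup n 𝕜) {a : n → ℝ}
    (h : H = V * diagonal (fun i => (a i : 𝕜)) * Vᴴ) :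
    Finset.univ.val.map hH.eigenvalues = Finset.univ.val.map a := by
  have hV' : Vᴴ * V = 1 := mem_unitaryGroup_iff'.1 hV
  have hchar : H.charpoly = ∏ i, (Polynomial.X - Polynomial.C (a i : 𝕜)) := by
    rw [h, charpoly_mul_comm, ← Matrix.mul_assoc, hV', Matrix.one_mul, charpoly_diagonal]
  have hroots := hH.roots_charpoly_eq_eigenvalues
  rw [hchar, Polynomial.roots_prod _ _ (Finset.prod_ne_zero_iff.2
    fun i _ => Polynomial.X_sub_C_ne_zero _)] at hroots
  simpa [Multiset.map_map, Function.comp_def] using (congrArg (Multiset.map RCLike.re) hroots).symm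

lemma singularValue_nonneg (M : Matrix m n 𝕜) (i : n) : 0 ≤ singularValue M i :=
  Real.sqrt_nonneg _

lemma sq_singularValue (M : Matrix m n 𝕜) (i : n) :
    singularValue M i ^ 2 = (posSemidef_conjTranspose_mul_self M).1.eigenvalues i :=
  Real.sq_sqrt ((posSemidef_conjTranspose_mul_self M).eigenvalues_nonneg i)

lemma conjTranspose_mul_diagonal_mul_conjTranspose (U V : Matrix n n 𝕜) (a : n → ℝ) :
    (U * diagonal (fun i => (a i : 𝕜)) * Vᴴ)ᴴ = V * diagonal (fun i => (a i : 𝕜)) * Uᴴ := by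
  have hdiag : (diagonal (fun i => (a i : 𝕜)))ᴴ = diagonal (fun i => (a i : 𝕜)) := by
    rw [diagonal_conjTranspose]
    congr 1
    ext i
    exact RCLike.conj_ofReal _
  rw [conjTranspose_mul, conjTranspose_mul, conjTranspose_conjTranspose, hdiag, Matrix.mul_assoc]

lemma map_singularValue_mul_diagonal_mul_conjTranspose {U V : Matrix n n 𝕜}
    (hU : U ∈ unitaryGroup n 𝕜) (hV : V ∈ unitaryGroup n 𝕜) {a : n → ℝ} (ha : ∀ i, 0 ≤ a i) :
    Finset.univ.val.map (singularValue (U * diagonal (fun i => (a i : 𝕜)) * Vᴴ)) =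
      Finset.univ.val.map a := by
  set D : Matrix n n 𝕜 := diagonal (fun i => (a i : 𝕜)) with hD
  set M : Matrix n n 𝕜 := U * D * Vᴴ with hM
  have hU' : Uᴴ * U = 1 := mem_unitaryGroup_iff'.1 hU
  have hgram : Mᴴ * M = V * diagonal (fun i => ((a i ^ 2 : ℝ) : 𝕜)) * Vᴴ :=
    calc Mᴴ * M = V * D * (Uᴴ * U) * D * Vᴴ := by
          rw [hM, hD, conjTranspose_mul_diagonal_mul_conjTranspose]
          simp only [Matrix.mul_assoc]
      _ = V * (D * D) * Vᴴ := by rw [hU', Matrix.mul_one, Matrix.mul_assoc V]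
      _ = V * diagonal (fun i => ((a i ^ 2 : ℝ) : 𝕜)) * Vᴴ := by
          simp only [hD, diagonal_mul_diagonal, pow_two, RCLike.ofReal_mul]
  have heig := map_eigenvalues_eq_of_eq_mul_diagonal_mul
    (posSemidef_conjTranspose_mul_self M).1 hV hgram
  calc Finset.univ.val.map (singularValue M)
      = (Finset.univ.val.map fun i => a i ^ 2).map Real.sqrt := by
        rw [← heig, Multiset.map_map]
        rfl
    _ = Finset.univ.val.map a := by
        rw [Multiset.map_map]
        exact Multiset.map_congr rfl fun i _ => Real.sqrt_sq (ha i)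

lemma exists_unitary_mul_diagonal_of_conjTranspose_mul_self_eq {M : Matrix n n 𝕜} {a : n → ℝ}
    (ha : ∀ i, 0 ≤ a i) (hM : Mᴴ * M = diagonal fun i => ((a i ^ 2 : ℝ) : 𝕜)) :
    ∃ U ∈ unitaryGroup n 𝕜, M = U * diagonal (fun i => (a i : 𝕜)) := by
  let w (j : n) : EuclideanSpace 𝕜 n := WithLp.toLp 2 (M.col j)
  have horth : Pairwise fun i j => inner 𝕜 (w i) (w j) = 0 := fun i j hij =>
    (inner_toLp_col M M i j).trans (by rw [hM, diagonal_apply_ne _ hij])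
  have hnorm (j : n) : ‖w j‖ = a j := by
    rw [← sq_eq_sq₀ (norm_nonneg _) (ha j), sq_norm_toLp_col, hM, diagonal_apply_eq,
      RCLike.ofReal_re]
  obtain ⟨b, hb⟩ := exists_orthonormalBasis_norm_smul_eq (by simp) horth
  refine ⟨(EuclideanSpace.basisFun n 𝕜).toBasis.toMatrix b,
    (EuclideanSpace.basisFun n 𝕜).toMatrix_orthonormalBasis_mem_unitary b, ?_⟩
  ext i j
  rw [mul_diagonal, mul_comm, ← hnorm j]
  exact congrArg (fun x : EuclideanSpace 𝕜 n => x i) (hb j)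

theorem exists_unitary_mul_diagonal_singularValue (M : Matrix n n 𝕜) :
    ∃ U ∈ unitaryGroup n 𝕜, ∃ V ∈ unitaryGroup n 𝕜,
      M = U * diagonal (fun i => (singularValue M i : 𝕜)) * Vᴴ := by
  obtain ⟨V, hV, hVG⟩ :=
    exists_unitary_mul_diagonal_eigenvalues (posSemidef_conjTranspose_mul_self M).1
  simp only [← sq_singularValue] at hVG
  have hV₁ : V * Vᴴ = 1 := mem_unitaryGroup_iff.1 hV
  have hV₂ : Vᴴ * V = 1 := mem_unitaryGroup_iff'.1 hV
  have hgram : (M * V)ᴴ * (M * V) = diagonal fun i => ((singularValue M i ^ 2 : ℝ) : 𝕜) :=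
    calc (M * V)ᴴ * (M * V) = Vᴴ * (Mᴴ * M) * V := by
          simp only [conjTranspose_mul, Matrix.mul_assoc]
      _ = (Vᴴ * V) * diagonal (fun i => ((singularValue M i ^ 2 : ℝ) : 𝕜)) * (Vᴴ * V) := by
          rw [← hVG]
          simp only [Matrix.mul_assoc]
      _ = diagonal fun i => ((singularValue M i ^ 2 : ℝ) : 𝕜) := by
          rw [hV₂, Matrix.one_mul, Matrix.mul_one]
  obtain ⟨U, hU, hMV⟩ :=
    exists_unitary_mul_diagonal_of_conjTranspose_mul_self_eq (singularValue_nonneg M) hgram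
  exact ⟨U, hU, V, hV, by rw [← hMV, Matrix.mul_assoc, hV₁, Matrix.mul_one]⟩

end

lemma norm_conjTranspose_mul_mul_apply_le {k l m n : Type*} [Fintype l] [Fintype m]
    [DecidableEq m] (A : Matrix l k ℂ) (X : Matrix l m ℂ) (B : Matrix m n ℂ) (i : k) (j : n) :
    ‖(Aᴴ * X * B) i j‖ ≤
      opN X * (‖WithLp.toLp 2 (A.col i)‖ * ‖WithLp.toLp 2 (B.col j)‖) :=
  calc ‖(Aᴴ * X * B) i j‖
      = ‖inner ℂ (WithLp.toLp 2 (A.col i)) (WithLp.toLp 2 ((X * B).col j))‖ := by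
        rw [inner_toLp_col, Matrix.mul_assoc]
    _ ≤ ‖WithLp.toLp 2 (A.col i)‖ * ‖WithLp.toLp 2 ((X * B).col j)‖ := norm_inner_le_norm _ _
    _ ≤ ‖WithLp.toLp 2 (A.col i)‖ * (opN X * ‖WithLp.toLp 2 (B.col j)‖) := by
        gcongr
        exact (toEuclideanLin X).toContinuousLinearMap.le_opNorm (WithLp.toLp 2 (B.col j))
    _ = opN X * (‖WithLp.toLp 2 (A.col i)‖ * ‖WithLp.toLp 2 (B.col j)‖) := mul_left_comm _ _ _

section

variable {n : Type*} [Fintype n] [DecidableEq n]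

lemma opN_one_le_one : opN (1 : Matrix n n ℂ) ≤ 1 :=
  ContinuousLinearMap.opNorm_le_bound _ zero_le_one fun x => by simp

lemma sNorm_nonneg (p : ℝ) (M : Matrix n n ℂ) : 0 ≤ sNorm p M :=
  Real.rpow_nonneg (Finset.sum_nonneg fun i _ => Real.rpow_nonneg
    ((posSemidef_conjTranspose_mul_self M).eigenvalues_nonneg i) _) _

lemma sNorm_eq_sum_singularValue (p : ℝ) (M : Matrix n n ℂ) :
    sNorm p M = (∑ i, singularValue M i ^ p) ^ (1 / p) := by
  simp only [sNorm, ← sq_singularValue, ← Real.rpow_natCast_mul (singularValue_nonneg M _),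
    Nat.cast_ofNat, mul_div_cancel₀ p (two_ne_zero' ℝ)]

lemma sNorm_mul_diagonal_mul_conjTranspose (p : ℝ) {U V : Matrix n n ℂ}
    (hU : U ∈ unitaryGroup n ℂ) (hV : V ∈ unitaryGroup n ℂ) {a : n → ℝ} (ha : ∀ i, 0 ≤ a i) :
    sNorm p (U * diagonal (fun i => (a i : ℂ)) * Vᴴ) = (∑ i, a i ^ p) ^ (1 / p) := by
  have hsum := congrArg (fun S => (S.map (· ^ p)).sum)
    (map_singularValue_mul_diagonal_mul_conjTranspose hU hV ha)
  simp only [Multiset.map_map] at hsum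
  rw [sNorm_eq_sum_singularValue]
  exact congrArg (· ^ (1 / p)) hsum

lemma sNorm_conjTranspose (p : ℝ) (M : Matrix n n ℂ) : sNorm p Mᴴ = sNorm p M := by
  obtain ⟨U, hU, V, hV, hM⟩ := exists_unitary_mul_diagonal_singularValue M
  have hMH : Mᴴ = V * diagonal (fun i => (singularValue M i : ℂ)) * Uᴴ :=
    (congrArg conjTranspose hM).trans (conjTranspose_mul_diagonal_mul_conjTranspose U V _)
  rw [hMH, sNorm_mul_diagonal_mul_conjTranspose p hV hU (singularValue_nonneg M),
    sNorm_eq_sum_singularValue]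

lemma sum_norm_col_mul_unitary_le_sNorm {q : ℝ} (hq : 2 ≤ q) (M : Matrix n n ℂ)
    {V : Matrix n n ℂ} (hV : V ∈ unitaryGroup n ℂ) :
    (∑ j, ‖WithLp.toLp 2 ((M * V).col j)‖ ^ q) ^ (1 / q) ≤ sNorm q M := by
  have hG := posSemidef_conjTranspose_mul_self M
  have hnorm (j : n) : ‖WithLp.toLp 2 ((M * V).col j)‖ ^ q =
      RCLike.re ((Vᴴ * (Mᴴ * M) * V) j j) ^ (q / 2) := by
    rw [show Vᴴ * (Mᴴ * M) * V = (M * V)ᴴ * (M * V) by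
        simp only [conjTranspose_mul, Matrix.mul_assoc], ← sq_norm_toLp_col,
      ← Real.rpow_natCast_mul (norm_nonneg _), Nat.cast_ofNat, mul_div_cancel₀ q two_ne_zero]
  have hsum : ∑ j, ‖WithLp.toLp 2 ((M * V).col j)‖ ^ q ≤ ∑ j, hG.1.eigenvalues j ^ (q / 2) := by
    simp only [hnorm]
    exact sum_convexOn_diag_conj_le hG.1 hV (convexOn_rpow (by linarith)) hG.eigenvalues_nonneg
  exact Real.rpow_le_rpow (by positivity) hsum (by positivity)

lemma exists_unitary_singularValue_mul_mul_le (A X B : Matrix n n ℂ) :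
    ∃ U ∈ unitaryGroup n ℂ, ∃ V ∈ unitaryGroup n ℂ, ∀ i, singularValue (A * X * B) i ≤
      opN X * (‖WithLp.toLp 2 ((Aᴴ * U).col i)‖ * ‖WithLp.toLp 2 ((B * V).col i)‖) := by
  obtain ⟨U, hU, V, hV, hT⟩ := exists_unitary_mul_diagonal_singularValue (A * X * B)
  have hU' : Uᴴ * U = 1 := mem_unitaryGroup_iff'.1 hU
  have hV' : Vᴴ * V = 1 := mem_unitaryGroup_iff'.1 hV
  have hσ := singularValue_nonneg (A * X * B)
  generalize singularValue (A * X * B) = σ at hT hσ ⊢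
  have hdiag : (Aᴴ * U)ᴴ * X * (B * V) = diagonal fun i => (σ i : ℂ) :=
    calc (Aᴴ * U)ᴴ * X * (B * V) = Uᴴ * (A * X * B) * V := by
          simp only [conjTranspose_mul, conjTranspose_conjTranspose, Matrix.mul_assoc]
      _ = Uᴴ * U * diagonal (fun i => (σ i : ℂ)) * (Vᴴ * V) := by
          rw [hT]
          simp only [Matrix.mul_assoc, Complex.coe_algebraMap]
      _ = diagonal fun i => (σ i : ℂ) := by rw [hU', hV', Matrix.one_mul, Matrix.mul_one]
  refine ⟨U, hU, V, hV, fun i => ?_⟩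
  have hentry := norm_conjTranspose_mul_mul_apply_le (Aᴴ * U) X (B * V) i i
  rwa [hdiag, diagonal_apply_eq, Complex.norm_of_nonneg (hσ i)] at hentry

theorem sNorm_mul_mul_le {s t r : ℝ} (h : s.HolderTriple t r) (hs : 2 ≤ s) (ht : 2 ≤ t)
    (A X B : Matrix n n ℂ) :
    sNorm r (A * X * B) ≤ sNorm s A * opN X * sNorm t B := by
  have hr : 0 < r := h.pos'
  have hX : 0 ≤ opN X := norm_nonneg _
  obtain ⟨U, hU, V, hV, hσ⟩ := exists_unitary_singularValue_mul_mul_le A X B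
  have hσ₀ := singularValue_nonneg (A * X * B)
  let a (i : n) : ℝ := ‖WithLp.toLp 2 ((Aᴴ * U).col i)‖
  let b (i : n) : ℝ := ‖WithLp.toLp 2 ((B * V).col i)‖
  calc sNorm r (A * X * B) = (∑ i, singularValue (A * X * B) i ^ r) ^ (1 / r) :=
        sNorm_eq_sum_singularValue r _
    _ ≤ (∑ i, (opN X * (a i * b i)) ^ r) ^ (1 / r) := by
        gcongr with i
        · exact Finset.sum_nonneg fun i _ => Real.rpow_nonneg (hσ₀ i) r
        · exact hσ₀ i
        · exact hσ i
    _ = opN X * (∑ i, (a i * b i) ^ r) ^ (1 / r) := by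
        have hmul (i : n) : (opN X * (a i * b i)) ^ r = opN X ^ r * (a i * b i) ^ r :=
          Real.mul_rpow hX (by positivity)
        rw [Finset.sum_congr rfl fun i _ => hmul i, ← Finset.mul_sum,
          Real.mul_rpow (by positivity) (by positivity), ← Real.rpow_mul hX,
          mul_one_div_cancel hr.ne', Real.rpow_one]
    _ ≤ opN X * ((∑ i, a i ^ s) ^ (1 / s) * (∑ i, b i ^ t) ^ (1 / t)) := by
        gcongr
        exact Lr_le_Lp_mul_Lq_of_nonneg _ h (fun _ _ => norm_nonneg _) fun _ _ => norm_nonneg _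
    _ ≤ opN X * (sNorm s Aᴴ * sNorm t B) := by
        gcongr
        · exact sNorm_nonneg s Aᴴ
        · exact sum_norm_col_mul_unitary_le_sNorm hs Aᴴ hU
        · exact sum_norm_col_mul_unitary_le_sNorm ht B hV
    _ = sNorm s A * opN X * sNorm t B := by rw [sNorm_conjTranspose]; ring

theorem exists_eq_mul_sNorm_mul_sNorm_eq {s t r : ℝ} (h : s.HolderTriple t r)
    (T : Matrix n n ℂ) : ∃ A B : Matrix n n ℂ, T = A * B ∧ sNorm s A * sNorm t B = sNorm r T := by
  have hs : 0 < s := h.pos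
  have ht : 0 < t := h.symm.pos
  have hr : 0 < r := h.pos'
  obtain ⟨U, hU, V, hV, hT⟩ := exists_unitary_mul_diagonal_singularValue T
  let σ := singularValue T
  have hσ (i : n) : 0 ≤ σ i := singularValue_nonneg T i
  let D (q : ℝ) : Matrix n n ℂ := diagonal fun i => ((σ i ^ (r / q) : ℝ) : ℂ)
  have sNorm_D {q : ℝ} (hq : 0 < q) {U V : Matrix n n ℂ} (hU : U ∈ unitaryGroup n ℂ)
      (hV : V ∈ unitaryGroup n ℂ) : sNorm q (U * D q * Vᴴ) = (∑ i, σ i ^ r) ^ (1 / q) := by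
    rw [sNorm_mul_diagonal_mul_conjTranspose q hU hV fun i => Real.rpow_nonneg (hσ i) _]
    have hpow (i : n) : (σ i ^ (r / q)) ^ q = σ i ^ r := by
      rw [← Real.rpow_mul (hσ i), div_mul_cancel₀ r hq.ne']
    simp only [hpow]
  have hD : D s * D t = diagonal fun i => (σ i : ℂ) := by
    have hsplit (i : n) : σ i ^ (r / s) * σ i ^ (r / t) = σ i := by
      rw [← Real.rpow_add_of_nonneg (hσ i) (by positivity) (by positivity), div_eq_mul_inv,
        div_eq_mul_inv, ← mul_add, h.inv_add_inv_eq_inv, mul_inv_cancel₀ hr.ne', Real.rpow_one]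
    simp only [D, diagonal_mul_diagonal, ← Complex.ofReal_mul, hsplit]
  refine ⟨U * D s * 1ᴴ, 1 * D t * Vᴴ, ?_, ?_⟩
  · calc T = U * (D s * D t) * Vᴴ := by rw [hD]; exact hT
      _ = U * D s * 1ᴴ * (1 * D t * Vᴴ) := by
          simp only [conjTranspose_one, Matrix.mul_one, Matrix.one_mul, Matrix.mul_assoc]
  · have hS : 0 ≤ ∑ i, σ i ^ r := Finset.sum_nonneg fun i _ => Real.rpow_nonneg (hσ i) r
    rw [sNorm_D hs hU (one_mem _), sNorm_D ht (one_mem _) hV,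
      ← Real.rpow_add_of_nonneg hS (by positivity) (by positivity), one_div, one_div,
      h.inv_add_inv_eq_inv, ← one_div, sNorm_eq_sum_singularValue]

theorem stmt4_general {s t r : ℝ} (h : s.HolderTriple t r) (hs : 2 ≤ s) (ht : 2 ≤ t)
    (T : Matrix n n ℂ) :
    IsLeast {c : ℝ | ∃ A X B : Matrix n n ℂ, T = A * X * B ∧
      c = sNorm s A * opN X * sNorm t B} (sNorm r T) := by
  refine ⟨?_, ?_⟩
  · obtain ⟨A, B, rfl, hAB⟩ := exists_eq_mul_sNorm_mul_sNorm_eq h T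
    refine ⟨A, 1, B, by rw [Matrix.mul_one], le_antisymm ?_ ?_⟩
    · simpa using sNorm_mul_mul_le h hs ht A 1 B
    · rw [← hAB, mul_right_comm]
      exact mul_le_of_le_one_right (mul_nonneg (sNorm_nonneg _ _) (sNorm_nonneg _ _)) opN_one_le_one
  · rintro c ⟨A, X, B, rfl, rfl⟩
    exact sNorm_mul_mul_le h hs ht A X B

end

/-- scalar Pisier factorization formula: for `1 ≤ p < ∞`,
`inf { ‖A‖_{S_{2p}} ‖X‖_∞ ‖B‖_{S_{2p}} : T = A X B } = ‖T‖_{S_p}`. -/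
theorem stmt4 {d : ℕ} (p : ℝ) (hp : 1 ≤ p) (T : Matrix (Fin d) (Fin d) ℂ) :
    sInf {c : ℝ | ∃ A X B : Matrix (Fin d) (Fin d) ℂ, T = A * X * B ∧
        c = sNorm (2 * p) A * opN X * sNorm (2 * p) B} = sNorm p T := by
  have h : (2 * p).HolderTriple (2 * p) p := ⟨by field_simp; norm_num, by positivity, by positivity⟩
  exact (stmt4_general h (by linarith) (by linarith) T).csInf_eq
end

section
/- The sandwiched Rényi conditional entropy H_α(X|Y)_ρ := -inf_{σ_Y} (α/(α-1)) log ‖(I⊗σ_Y^{(1-α)/(2α)}) ρ_{XY} (I⊗σ_Y^{(1-α)/(2α)})‖_{S_α} (infimum over density matrices σ_Y) is monotone non-increasing in α for α ≥ 1: if 1 ≤ β ≤ α then H_α(X|Y)_ρ ≤ H_β(X|Y)_ρ. -/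
open scoped Kronecker ComplexOrder
open Matrix

/-- Real power of a Hermitian matrix, via the spectral decomposition (with the
convention `0 ^ r = 0` for `r ≠ 0`, i.e. negative powers are taken on the support). -/
noncomputable def herPow {n : Type*} [Fintype n] [DecidableEq n] (A : Matrix n n ℂ)
    (hA : A.IsHermitian) (r : ℝ) : Matrix n n ℂ :=
  (hA.eigenvectorUnitary : Matrix n n ℂ) *
    Matrix.diagonal (fun i => ((hA.eigenvalues i ^ r : ℝ) : ℂ)) *
    (star (hA.eigenvectorUnitary : Matrix n n ℂ))

/-- The sandwiched Rényi conditional entropy `H_α(A|B)_ρ` of a state `ρ` on a bipartite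
system `A × B`:
`H_α(A|B)_ρ = - inf over density matrices σ on B of
  (α/(α-1)) log ‖(I_A ⊗ σ^{(1-α)/(2α)}) ρ (I_A ⊗ σ^{(1-α)/(2α)})‖_{S_α}`. -/
noncomputable def condRenyi {A B : Type*} [Fintype A] [DecidableEq A] [Fintype B]
    [DecidableEq B] (α : ℝ) (ρ : Matrix (A × B) (A × B) ℂ) : ℝ :=
  - sInf {c : ℝ | ∃ (σ : Matrix B B ℂ) (hσ : σ.PosSemidef), σ.trace = 1 ∧
      c = α / (α - 1) * Real.log (sNorm α
        (((1 : Matrix A A ℂ) ⊗ₖ herPow σ hσ.1 ((1 - α) / (2 * α))) * ρ *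
         ((1 : Matrix A A ℂ) ⊗ₖ herPow σ hσ.1 ((1 - α) / (2 * α)))))}

/-!
For fixed `σ` the sandwiched Rényi divergence `D_α(ρ‖σ)` is non-decreasing in `α`. Write
`ρ = Bᴴ * B`; then `‖σ^{-1/(2α')} ρ σ^{-1/(2α')}‖_α = ‖B σ^{-1/α'} Bᴴ‖_α`, where `α'` is the
exponent conjugate to `α`. For the smaller order `β`, choose `B` so that `B σ^{-1/β'} Bᴴ` is
diagonal. In an eigenbasis of `σ` the diagonal entries of `B σ^{-1/β'} Bᴴ` and `B σ^{-1/α'} Bᴴ` are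
sums of `λ_j^{-1/β'}` and `λ_j^{-1/α'}` with the same weights `‖(B U)_{kj}‖²`, whose total is
`tr ρ = 1`. Hölder duality and Jensen's inequality for `x ↦ x^{β'/α'}` compare the two diagonals,
and the diagonal of a positive semidefinite matrix is dominated by its Schatten norm. Taking minus
the infimum over `σ` reverses the inequality.
-/

section WeightedSums

open scoped NNReal

-- Duality represents the `ℓ^p` norm as a single weighted average, to which Jensen's inequality
-- applies; Hölder's inequality then returns to the `ℓ^q` norm because `(p' / q') * q' = p'`.
theorem nnreal_weighted_Lp_rpow_le {ι κ : Type*} [Fintype ι] [Fintype κ] (w a : ι → κ → ℝ≥0)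
    (hw : ∑ i, ∑ j, w i j = 1) {p p' q q' : ℝ} (hp : p.HolderConjugate p')
    (hq : q.HolderConjugate q') (hpq : q' ≤ p') :
    ((∑ i, (∑ j, w i j * a i j) ^ p) ^ (1 / p)) ^ (p' / q') ≤
      (∑ i, (∑ j, w i j * a i j ^ (p' / q')) ^ q) ^ (1 / q) := by
  set r := p' / q'
  have hr1 : 1 ≤ r := (one_le_div hq.symm.pos).2 hpq
  have hrq : r * q' = p' := div_mul_cancel₀ _ hq.symm.ne_zero
  obtain ⟨⟨g, hg, hnorm⟩, -⟩ :=
    NNReal.isGreatest_Lp Finset.univ (fun i => ∑ j, w i j * a i j) hp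
  have hgr : ∑ i, (g i ^ r) ^ q' ≤ 1 := by
    simpa only [← NNReal.rpow_mul, hrq, Set.mem_ofPred_eq] using hg
  rw [← hnorm]
  calc (∑ i, (∑ j, w i j * a i j) * g i) ^ r
      = (∑ ij : ι × κ, w ij.1 ij.2 * (a ij.1 ij.2 * g ij.1)) ^ r := by
        simp only [Fintype.sum_prod_type, Finset.sum_mul, mul_assoc]
    _ ≤ ∑ ij : ι × κ, w ij.1 ij.2 * (a ij.1 ij.2 * g ij.1) ^ r :=
        NNReal.rpow_arith_mean_le_arith_mean_rpow _ _ _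
          (by rwa [Fintype.sum_prod_type]) hr1
    _ = ∑ i, (∑ j, w i j * a i j ^ r) * g i ^ r := by
        simp only [Fintype.sum_prod_type, Finset.sum_mul, NNReal.mul_rpow, mul_assoc]
    _ ≤ (∑ i, (∑ j, w i j * a i j ^ r) ^ q) ^ (1 / q) :=
        (NNReal.isGreatest_Lp Finset.univ (fun i => ∑ j, w i j * a i j ^ r) hq).2
          ⟨fun i => g i ^ r, hgr, rfl⟩

theorem weighted_Lp_rpow_le {ι κ : Type*} [Fintype ι] [Fintype κ] {w a : ι → κ → ℝ}
    (hw0 : ∀ i j, 0 ≤ w i j) (ha0 : ∀ i j, 0 ≤ a i j) (hw : ∑ i, ∑ j, w i j = 1)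
    {p p' q q' : ℝ} (hp : p.HolderConjugate p') (hq : q.HolderConjugate q') (hpq : q' ≤ p') :
    ((∑ i, (∑ j, w i j * a i j) ^ p) ^ (1 / p)) ^ (p' / q') ≤
      (∑ i, (∑ j, w i j * a i j ^ (p' / q')) ^ q) ^ (1 / q) := by
  lift w to ι → κ → ℝ≥0 using hw0
  lift a to ι → κ → ℝ≥0 using ha0
  beta_reduce at hw ⊢
  exact_mod_cast nnreal_weighted_Lp_rpow_le w a (by exact_mod_cast hw) hp hq hpq

end WeightedSums

section Spectral

variable {m n : Type*} [Fintype n]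

theorem mul_conjTranspose_self_apply_self (M : Matrix m n ℂ) (k : m) :
    (M * Mᴴ) k k = ((∑ j, ‖M k j‖ ^ 2 : ℝ) : ℂ) := by
  simp [Matrix.mul_apply, Complex.mul_conj']

open scoped MatrixOrder in
theorem exists_eq_conjTranspose_mul_self {ρ : Matrix n n ℂ} (hρ : ρ.PosSemidef) :
    ∃ B : Matrix n n ℂ, ρ = Bᴴ * B := by
  classical exact CStarAlgebra.nonneg_iff_eq_star_mul_self.1 hρ.nonneg

-- Replacing `B` by `Vᴴ * B`, with `V` unitary, keeps `Bᴴ * B`; take the columns of `V` to be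
-- an eigenbasis of `(B * K) * (B * K)ᴴ`.
theorem exists_conjTranspose_mul_self_eq_and_isDiag {ρ : Matrix n n ℂ} (hρ : ρ.PosSemidef)
    (K : Matrix n n ℂ) : ∃ B : Matrix n n ℂ, Bᴴ * B = ρ ∧ (B * K * (B * K)ᴴ).IsDiag := by
  classical
  obtain ⟨S, hS⟩ := exists_eq_conjTranspose_mul_self hρ
  have hH : (S * K * (S * K)ᴴ).IsHermitian := isHermitian_mul_conjTranspose_self _
  have hconj := hH.conjStarAlgAut_star_eigenvectorUnitary
  have hV := mem_unitaryGroup_iff.1 hH.eigenvectorUnitary.2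
  rw [Unitary.conjStarAlgAut_star_apply] at hconj
  generalize (hH.eigenvectorUnitary : Matrix n n ℂ) = V at hconj hV
  refine ⟨Vᴴ * S, ?_, ?_⟩
  · rw [conjTranspose_mul, conjTranspose_conjTranspose, Matrix.mul_assoc, ← Matrix.mul_assoc V,
      ← star_eq_conjTranspose V, hV, Matrix.one_mul, hS]
  · have hdiag : Vᴴ * S * K * (Vᴴ * S * K)ᴴ = star V * (S * K * (S * K)ᴴ) * V := by
      simp only [conjTranspose_mul, conjTranspose_conjTranspose, Matrix.mul_assoc,
        star_eq_conjTranspose]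
    rw [hdiag, hconj]
    exact isDiag_diagonal _

variable [DecidableEq n]

theorem sum_norm_sq_apply_unitary (U : unitaryGroup n ℂ) (k : n) :
    ∑ j, ‖(U : Matrix n n ℂ) k j‖ ^ 2 = 1 := by
  have h := mul_conjTranspose_self_apply_self (U : Matrix n n ℂ) k
  rw [← star_eq_conjTranspose, mem_unitaryGroup_iff.1 U.2, Matrix.one_apply_eq] at h
  exact_mod_cast h.symm

theorem sum_sum_norm_sq_mul_unitary [Fintype m] (B : Matrix m n ℂ) (U : unitaryGroup n ℂ) :
    ∑ k, ∑ j, ‖(B * (U : Matrix n n ℂ)) k j‖ ^ 2 = (Bᴴ * B).trace.re := by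
  have hB : B * (U : Matrix n n ℂ) * (B * (U : Matrix n n ℂ))ᴴ = B * Bᴴ := by
    rw [conjTranspose_mul, Matrix.mul_assoc, ← Matrix.mul_assoc (U : Matrix n n ℂ),
      ← star_eq_conjTranspose (U : Matrix n n ℂ), mem_unitaryGroup_iff.1 U.2, Matrix.one_mul]
  rw [trace_mul_comm, ← hB]
  simp only [Matrix.trace, diag_apply, mul_conjTranspose_self_apply_self, Complex.re_sum,
    Complex.ofReal_re]

theorem mul_cfc_mul_conjTranspose_apply_self {A : Matrix n n ℂ} (hA : A.IsHermitian)
    (f : ℝ → ℝ) (B : Matrix m n ℂ) (k : m) :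
    (B * cfc f A * Bᴴ) k k =
      ((∑ j, ‖(B * (hA.eigenvectorUnitary : Matrix n n ℂ)) k j‖ ^ 2 *
        f (hA.eigenvalues j) : ℝ) : ℂ) := by
  set W := B * (hA.eigenvectorUnitary : Matrix n n ℂ) with hW
  have hdiag : B * cfc f A * Bᴴ =
      W * diagonal (fun j => (f (hA.eigenvalues j) : ℂ)) * Wᴴ := by
    rw [hA.cfc_eq, IsHermitian.cfc, Unitary.conjStarAlgAut_apply, hW, conjTranspose_mul,
      star_eq_conjTranspose]
    simp only [Matrix.mul_assoc]
    rfl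
  rw [hdiag, Matrix.mul_apply]
  push_cast
  refine Finset.sum_congr rfl fun j _ => ?_
  rw [mul_diagonal, conjTranspose_apply, RCLike.star_def, mul_right_comm, Complex.mul_conj']

theorem sum_comp_eigenvalues_of_charpoly_eq {A : Matrix n n ℂ} (hA : A.IsHermitian) {d : n → ℝ}
    (h : A.charpoly = ∏ i, (Polynomial.X - Polynomial.C (d i : ℂ))) (f : ℝ → ℝ) :
    ∑ i, f (hA.eigenvalues i) = ∑ i, f (d i) := by
  have hroots : Multiset.map (fun i => (hA.eigenvalues i : ℂ)) Finset.univ.val =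
      Multiset.map (fun i => (d i : ℂ)) Finset.univ.val := by
    rw [← Polynomial.roots_multiset_prod_X_sub_C (Multiset.map (fun i => (d i : ℂ)) _),
      Multiset.map_map]
    exact hA.roots_charpoly_eq_eigenvalues.symm.trans (congrArg Polynomial.roots h)
  have hsum := congrArg (fun s => (Multiset.map (fun z : ℂ => f z.re) s).sum) hroots
  simp only [Multiset.map_map, Function.comp_def, Complex.ofReal_re] at hsum
  exact hsum

end Spectral

section SchattenNorm

variable {n : Type*} [Fintype n] [DecidableEq n] {p : ℝ}

theorem sNorm_eq_sum_eigenvalues {M : Matrix n n ℂ} (hM : M.PosSemidef) :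
    sNorm p M = (∑ i, hM.1.eigenvalues i ^ p) ^ (1 / p) := by
  have hsq : Mᴴ * M = cfc (fun x : ℝ => x ^ 2) M := by
    rw [hM.1.eq, ← sq, cfc_pow_id M 2 hM.1.isSelfAdjoint]
  have hsum := sum_comp_eigenvalues_of_charpoly_eq (posSemidef_conjTranspose_mul_self M).1
    (d := fun i => hM.1.eigenvalues i ^ 2) (by rw [hsq, hM.1.charpoly_cfc_eq]; rfl)
    fun x => x ^ (p / 2)
  rw [sNorm, hsum]
  congr 1
  refine Finset.sum_congr rfl fun i _ => ?_
  rw [← Real.rpow_natCast_mul (hM.eigenvalues_nonneg i), Nat.cast_ofNat,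
    mul_div_cancel₀ p two_ne_zero]

theorem sNorm_conjTranspose_mul_self (p : ℝ) (C : Matrix n n ℂ) :
    sNorm p (Cᴴ * C) = sNorm p (C * Cᴴ) := by
  have heig := ((posSemidef_conjTranspose_mul_self C).1.eigenvalues_eq_eigenvalues_iff
    (posSemidef_self_mul_conjTranspose C).1).2 (charpoly_mul_comm _ _)
  rw [sNorm_eq_sum_eigenvalues (posSemidef_conjTranspose_mul_self C),
    sNorm_eq_sum_eigenvalues (posSemidef_self_mul_conjTranspose C), heig]

theorem sNorm_eq_sum_diag {M : Matrix n n ℂ} (hM : M.PosSemidef) (hd : M.IsDiag) :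
    sNorm p M = (∑ k, (M k k).re ^ p) ^ (1 / p) := by
  have hre (k : n) : ((M k k).re : ℂ) = M k k := hM.1.coe_re_apply_self k
  rw [sNorm_eq_sum_eigenvalues hM]
  congr 1
  refine sum_comp_eigenvalues_of_charpoly_eq hM.1 ?_ fun x => x ^ p
  conv_lhs => rw [← hd.diagonal_diag, charpoly_diagonal]
  simp only [hre, diag_apply]

-- The diagonal is the image of the spectrum under a doubly stochastic matrix.
theorem sum_diag_rpow_le_sNorm {M : Matrix n n ℂ} (hM : M.PosSemidef) (hp : 1 ≤ p) :
    (∑ k, (M k k).re ^ p) ^ (1 / p) ≤ sNorm p M := by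
  set U := hM.1.eigenvectorUnitary
  set w : n → n → ℝ := fun k j => ‖(U : Matrix n n ℂ) k j‖ ^ 2
  have hdiag (k : n) : (M k k).re = ∑ j, w k j * hM.1.eigenvalues j := by
    have h := mul_cfc_mul_conjTranspose_apply_self hM.1 id 1 k
    rw [cfc_id ℝ M hM.1.isSelfAdjoint, conjTranspose_one, Matrix.one_mul, Matrix.mul_one,
      Matrix.one_mul] at h
    rw [h, Complex.ofReal_re]
    rfl
  have hcol (j : n) : ∑ k, w k j = 1 := by
    simpa only [Unitary.coe_star, star_apply, norm_star] using
      sum_norm_sq_apply_unitary (star U) j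
  rw [sNorm_eq_sum_eigenvalues hM]
  refine Real.rpow_le_rpow ?_ ?_ (by positivity)
  · refine Finset.sum_nonneg fun k _ => Real.rpow_nonneg ?_ _
    exact (Complex.le_def.1 hM.diag_nonneg).1
  calc ∑ k, (M k k).re ^ p
      ≤ ∑ k, ∑ j, w k j * hM.1.eigenvalues j ^ p := by
        refine Finset.sum_le_sum fun k _ => ?_
        rw [hdiag]
        exact Real.rpow_arith_mean_le_arith_mean_rpow _ _ _ (fun j _ => sq_nonneg _)
          (sum_norm_sq_apply_unitary U k) (fun j _ => hM.eigenvalues_nonneg j) hp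
    _ = ∑ j, hM.1.eigenvalues j ^ p := by
        rw [Finset.sum_comm]
        simp only [← Finset.sum_mul, hcol, one_mul]

theorem re_trace_eq_sum_eigenvalues {M : Matrix n n ℂ} (hM : M.IsHermitian) :
    M.trace.re = ∑ i, hM.eigenvalues i := by
  simp [hM.trace_eq_sum_eigenvalues]

theorem sNorm_le_re_trace {M : Matrix n n ℂ} (hM : M.PosSemidef) (hp : 1 ≤ p) :
    sNorm p M ≤ M.trace.re := by
  have hp0 : 0 < p := zero_lt_one.trans_le hp
  have h0 := hM.eigenvalues_nonneg
  rw [sNorm_eq_sum_eigenvalues hM, re_trace_eq_sum_eigenvalues hM.1, one_div,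
    Real.rpow_inv_le_iff_of_pos (Finset.sum_nonneg fun i _ => Real.rpow_nonneg (h0 i) p)
      (Finset.sum_nonneg fun i _ => h0 i) hp0]
  set T := ∑ i, hM.1.eigenvalues i
  have hsplit {x : ℝ} (hx : 0 ≤ x) : x ^ p = x * x ^ (p - 1) := by
    rw [← Real.rpow_one_add' hx (by linarith), add_sub_cancel]
  calc ∑ i, hM.1.eigenvalues i ^ p
      ≤ ∑ i, hM.1.eigenvalues i * T ^ (p - 1) := by
        refine Finset.sum_le_sum fun i _ => ?_
        rw [hsplit (h0 i)]
        exact mul_le_mul_of_nonneg_left (Real.rpow_le_rpow (h0 i)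
          (Finset.single_le_sum (fun j _ => h0 j) (Finset.mem_univ i)) (by linarith)) (h0 i)
    _ = T ^ p := by rw [← Finset.sum_mul, hsplit (Finset.sum_nonneg fun i _ => h0 i)]

theorem re_trace_le_card_mul_sNorm {M : Matrix n n ℂ} (hM : M.PosSemidef) (hp : 0 < p) :
    M.trace.re ≤ Fintype.card n * sNorm p M := by
  have h0 := hM.eigenvalues_nonneg
  have hle (i : n) : hM.1.eigenvalues i ≤ sNorm p M := by
    rw [sNorm_eq_sum_eigenvalues hM, one_div, Real.le_rpow_inv_iff_of_pos (h0 i)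
      (Finset.sum_nonneg fun i _ => Real.rpow_nonneg (h0 i) p) hp]
    exact Finset.single_le_sum (f := fun i => hM.1.eigenvalues i ^ p)
      (fun j _ => Real.rpow_nonneg (h0 j) p) (Finset.mem_univ i)
  rw [re_trace_eq_sum_eigenvalues hM.1, ← nsmul_eq_mul]
  exact Finset.sum_le_card_nsmul _ _ _ fun i _ => hle i

end SchattenNorm

section SandwichedDivergence

variable {n : Type*} [Fintype n] [DecidableEq n]

/-- The quantity `‖σ^{(1-p)/(2p)} ρ σ^{(1-p)/(2p)}‖_p` whose logarithm enters the sandwiched Rényi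
divergence of order `p`. The functional calculus is applied to the real power function, so that
`0 ^ r = 0` for `r ≠ 0` and negative powers are taken on the support of `σ`. -/
noncomputable def sandwichedNorm (p : ℝ) (ρ σ : Matrix n n ℂ) : ℝ :=
  sNorm p (cfc (fun x : ℝ => x ^ ((1 - p) / (2 * p))) σ * ρ *
    cfc (fun x : ℝ => x ^ ((1 - p) / (2 * p))) σ)

/-- The sandwiched Rényi divergence `D_α(ρ‖σ)` of order `α`, without the convention
`D_α(ρ‖σ) = ∞` when the support of `ρ` is not contained in that of `σ`. -/
noncomputable def sandwichedDiv (α : ℝ) (ρ σ : Matrix n n ℂ) : ℝ :=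
  α / (α - 1) * Real.log (sandwichedNorm α ρ σ)

theorem isHermitian_cfc (f : ℝ → ℝ) (σ : Matrix n n ℂ) : (cfc f σ).IsHermitian :=
  (cfc_predicate f σ : IsSelfAdjoint _)

open scoped MatrixOrder in
theorem nonneg_of_mem_spectrum {σ : Matrix n n ℂ} (hσ : σ.PosSemidef) {x : ℝ}
    (hx : x ∈ spectrum ℝ σ) : 0 ≤ x :=
  spectrum_nonneg_of_nonneg hσ.nonneg hx

open scoped MatrixOrder in
theorem posSemidef_cfc_rpow {σ : Matrix n n ℂ} (hσ : σ.PosSemidef) (r : ℝ) :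
    (cfc (fun x : ℝ => x ^ r) σ).PosSemidef :=
  nonneg_iff_posSemidef.1 <| cfc_nonneg fun _ hx =>
    Real.rpow_nonneg (nonneg_of_mem_spectrum hσ hx) r

theorem cfc_rpow_half_mul_self {σ : Matrix n n ℂ} (hσ : σ.PosSemidef) {r : ℝ} (hr : r ≠ 0) :
    cfc (fun x : ℝ => x ^ (r / 2)) σ * cfc (fun x : ℝ => x ^ (r / 2)) σ =
      cfc (fun x : ℝ => x ^ r) σ := by
  rw [← cfc_mul _ _ σ (finite_real_spectrum.continuousOn _) (finite_real_spectrum.continuousOn _)]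
  refine cfc_congr fun x hx => ?_
  rw [← Real.rpow_add' (nonneg_of_mem_spectrum hσ hx) (by rwa [add_halves]), add_halves]

theorem sandwichedNorm_eq {p p' : ℝ} (hp : p.HolderConjugate p') {σ : Matrix n n ℂ}
    (hσ : σ.PosSemidef) (B : Matrix n n ℂ) :
    sandwichedNorm p (Bᴴ * B) σ = sNorm p (B * cfc (fun x : ℝ => x ^ (-p'⁻¹)) σ * Bᴴ) := by
  have hexp : (1 - p) / (2 * p) = -p'⁻¹ / 2 := by
    have h := hp.inv_add_inv_eq_one
    have h0 := hp.ne_zero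
    rw [show p'⁻¹ = 1 - p⁻¹ by linarith]
    field_simp
    ring
  have hp' : -p'⁻¹ ≠ 0 := neg_ne_zero.2 (inv_ne_zero hp.symm.ne_zero)
  rw [sandwichedNorm, hexp, ← cfc_rpow_half_mul_self hσ hp']
  have hK := (isHermitian_cfc (fun x : ℝ => x ^ (-p'⁻¹ / 2)) σ).eq
  generalize cfc (fun x : ℝ => x ^ (-p'⁻¹ / 2)) σ = K at hK ⊢
  have hC := sNorm_conjTranspose_mul_self p (B * K)
  rw [conjTranspose_mul, hK] at hC
  simpa only [Matrix.mul_assoc] using hC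

theorem sandwichedNorm_rpow_le {p p' q q' : ℝ} (hp : p.HolderConjugate p')
    (hq : q.HolderConjugate q') (hpq : p ≤ q) {ρ σ : Matrix n n ℂ} (hρ : ρ.PosSemidef)
    (hρ1 : ρ.trace = 1) (hσ : σ.PosSemidef) :
    sandwichedNorm p ρ σ ^ (p' / q') ≤ sandwichedNorm q ρ σ := by
  obtain ⟨B, rfl, hdiag⟩ := exists_conjTranspose_mul_self_eq_and_isDiag hρ
    (cfc (fun x : ℝ => x ^ (-p'⁻¹ / 2)) σ)
  rw [conjTranspose_mul, (isHermitian_cfc _ σ).eq, ← Matrix.mul_assoc, Matrix.mul_assoc B,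
    cfc_rpow_half_mul_self hσ (neg_ne_zero.2 hp.symm.inv_ne_zero)] at hdiag
  have hpsd (r : ℝ) : (B * cfc (fun x : ℝ => x ^ r) σ * Bᴴ).PosSemidef :=
    (posSemidef_cfc_rpow hσ r).mul_mul_conjTranspose_same B
  have hw : ∑ k, ∑ j, ‖(B * (hσ.1.eigenvectorUnitary : Matrix n n ℂ)) k j‖ ^ 2 = 1 := by
    rw [sum_sum_norm_sq_mul_unitary, hρ1, Complex.one_re]
  have hpow (j : n) : hσ.1.eigenvalues j ^ (-q'⁻¹) =
      (hσ.1.eigenvalues j ^ (-p'⁻¹)) ^ (p' / q') := by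
    rw [← Real.rpow_mul (hσ.eigenvalues_nonneg j), ← neg_mul_eq_neg_mul, ← mul_div_assoc,
      inv_mul_cancel₀ hp.symm.ne_zero, one_div]
  have hconj : q' ≤ p' := by
    rw [hp.conjugate_eq, hq.conjugate_eq, div_le_div_iff₀ hq.sub_one_pos hp.sub_one_pos]
    linarith
  rw [sandwichedNorm_eq hp hσ, sandwichedNorm_eq hq hσ, sNorm_eq_sum_diag (hpsd _) hdiag]
  refine le_trans ?_ (sum_diag_rpow_le_sNorm (hpsd _) hq.lt.le)
  simp only [mul_cfc_mul_conjTranspose_apply_self hσ.1, Complex.ofReal_re, hpow]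
  exact weighted_Lp_rpow_le (fun k j => sq_nonneg _)
    (fun _ j => Real.rpow_nonneg (hσ.eigenvalues_nonneg j) (-p'⁻¹)) hw hp hq hconj

theorem sandwichedDiv_mono {α β : ℝ} (hβ : 1 < β) (hβα : β ≤ α) {ρ σ : Matrix n n ℂ}
    (hρ : ρ.PosSemidef) (hρ1 : ρ.trace = 1) (hσ : σ.PosSemidef)
    (h0 : 0 < sandwichedNorm β ρ σ) : sandwichedDiv β ρ σ ≤ sandwichedDiv α ρ σ := by
  have hα' := Real.HolderConjugate.conjExponent (hβ.trans_le hβα)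
  have hlog := Real.log_le_log (Real.rpow_pos_of_pos h0 _)
    (sandwichedNorm_rpow_le (.conjExponent hβ) hα' hβα hρ hρ1 hσ)
  rw [Real.log_rpow h0] at hlog
  calc sandwichedDiv β ρ σ
      = α.conjExponent * (β.conjExponent / α.conjExponent *
          Real.log (sandwichedNorm β ρ σ)) := by
        rw [← mul_assoc, mul_div_cancel₀ _ hα'.symm.ne_zero]; rfl
    _ ≤ α.conjExponent * Real.log (sandwichedNorm α ρ σ) :=
        mul_le_mul_of_nonneg_left hlog hα'.symm.nonneg

theorem sandwichedNorm_le_re_trace {p p' : ℝ} (hp : p.HolderConjugate p') {ρ σ : Matrix n n ℂ}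
    (hρ : ρ.PosSemidef) (hσ : σ.PosSemidef) :
    sandwichedNorm p ρ σ ≤ (ρ * cfc (fun x : ℝ => x ^ (-p'⁻¹)) σ).trace.re := by
  obtain ⟨B, rfl⟩ := exists_eq_conjTranspose_mul_self hρ
  rw [sandwichedNorm_eq hp hσ, Matrix.mul_assoc Bᴴ, trace_mul_comm Bᴴ]
  exact sNorm_le_re_trace ((posSemidef_cfc_rpow hσ _).mul_mul_conjTranspose_same B) hp.lt.le

theorem re_trace_le_card_mul_sandwichedNorm {p p' : ℝ} (hp : p.HolderConjugate p')
    {ρ σ : Matrix n n ℂ} (hρ : ρ.PosSemidef) (hσ : σ.PosSemidef) :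
    (ρ * cfc (fun x : ℝ => x ^ (-p'⁻¹)) σ).trace.re ≤
      Fintype.card n * sandwichedNorm p ρ σ := by
  obtain ⟨B, rfl⟩ := exists_eq_conjTranspose_mul_self hρ
  rw [sandwichedNorm_eq hp hσ, Matrix.mul_assoc Bᴴ, trace_mul_comm Bᴴ]
  exact re_trace_le_card_mul_sNorm
    ((posSemidef_cfc_rpow hσ _).mul_mul_conjTranspose_same B) hp.pos

end SandwichedDivergence

section DensityMatrices

/-- The set of density matrices (states) on `ℂ^n`. -/
def densityMatrices (n : Type*) [Fintype n] : Set (Matrix n n ℂ) :=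
  {σ | σ.PosSemidef ∧ σ.trace = 1}

variable {n : Type*} [Fintype n]

open scoped MatrixOrder in
theorem exists_pos_mul_re_trace_le [Nonempty n] {R : Matrix n n ℂ} (hR : R.PosDef) :
    ∃ l > 0, ∀ N : Matrix n n ℂ, N.PosSemidef → l * N.trace.re ≤ (R * N).trace.re := by
  classical
  obtain ⟨l, hl, hle⟩ := (CFC.exists_pos_algebraMap_le_iff hR.1.isSelfAdjoint).2
    fun _ hx => hR.isStrictlyPositive.spectrum_pos hx
  refine ⟨l, hl, fun N hN => ?_⟩
  obtain ⟨B, rfl⟩ := exists_eq_conjTranspose_mul_self hN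
  have htr := ((Matrix.le_iff.1 hle).mul_mul_conjTranspose_same B).trace_nonneg
  rw [Matrix.mul_assoc, trace_mul_comm, Matrix.mul_assoc, Matrix.sub_mul, trace_sub,
    sub_nonneg, Algebra.algebraMap_eq_smul_one, smul_mul_assoc, Matrix.one_mul, trace_smul] at htr
  simpa using (Complex.le_def.1 htr).1

section

variable [DecidableEq n]

theorem re_trace_cfc {σ : Matrix n n ℂ} (hσ : σ.IsHermitian) (f : ℝ → ℝ) :
    (cfc f σ).trace.re = ∑ i, f (hσ.eigenvalues i) := by
  rw [re_trace_eq_sum_eigenvalues (isHermitian_cfc f σ)]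
  exact sum_comp_eigenvalues_of_charpoly_eq (isHermitian_cfc f σ)
    (d := fun i => f (hσ.eigenvalues i)) (hσ.charpoly_cfc_eq f) id

theorem one_le_re_trace_cfc_rpow {σ : Matrix n n ℂ} (hσ : σ ∈ densityMatrices n) {r : ℝ}
    (hr : r ≤ 0) : 1 ≤ (cfc (fun x : ℝ => x ^ r) σ).trace.re := by
  obtain ⟨hσ, hσ1⟩ := hσ
  have h0 := hσ.eigenvalues_nonneg
  have hsum : ∑ i, hσ.1.eigenvalues i = 1 := by
    rw [← re_trace_eq_sum_eigenvalues, hσ1, Complex.one_re]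
  rw [re_trace_cfc hσ.1, ← hsum]
  refine Finset.sum_le_sum fun i _ => ?_
  have hle : hσ.1.eigenvalues i ≤ 1 :=
    hsum ▸ Finset.single_le_sum (fun j _ => h0 j) (Finset.mem_univ i)
  rcases (h0 i).eq_or_lt with hi | hi
  · rw [← hi]
    exact Real.rpow_nonneg le_rfl r
  · exact hle.trans (Real.one_le_rpow_of_pos_of_le_one_of_nonpos hi hle hr)

theorem cfc_rpow_of_isIdempotentElem {σ : Matrix n n ℂ} (hσ : σ.IsHermitian)
    (hσi : IsIdempotentElem σ) {r : ℝ} (hr : r ≠ 0) : cfc (fun x : ℝ => x ^ r) σ = σ := by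
  conv_rhs => rw [← cfc_id ℝ σ hσ.isSelfAdjoint]
  refine cfc_congr fun x hx => ?_
  rcases hσi.spectrum_subset ℝ hx with rfl | rfl
  · exact Real.zero_rpow hr
  · exact Real.one_rpow r

-- The pure state whose amplitudes in an eigenbasis of `R` are `√(w i)`.
theorem exists_isIdempotentElem_trace_mul_eq {R : Matrix n n ℂ} (hR : R.IsHermitian)
    {w : n → ℝ} (hw0 : ∀ i, 0 ≤ w i) (hw1 : ∑ i, w i = 1) :
    ∃ σ ∈ densityMatrices n, IsIdempotentElem σ ∧
      (R * σ).trace = ((∑ i, w i * hR.eigenvalues i : ℝ) : ℂ) := by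
  set v : n → ℂ := fun i => (√(w i) : ℂ)
  have hv (i : n) : v i * star v i = (w i : ℂ) := by
    rw [Pi.star_apply, RCLike.star_def, Complex.conj_ofReal, ← Complex.ofReal_mul,
      Real.mul_self_sqrt (hw0 i)]
  have hvv : star v ⬝ᵥ v = 1 := by
    rw [dotProduct_comm, dotProduct]
    simp only [hv]
    exact_mod_cast hw1
  have hRU := hR.conjStarAlgAut_star_eigenvectorUnitary
  rw [Unitary.conjStarAlgAut_star_apply] at hRU
  have hU := mem_unitaryGroup_iff'.1 hR.eigenvectorUnitary.2
  generalize (hR.eigenvectorUnitary : Matrix n n ℂ) = U at hRU hU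
  refine ⟨U * vecMulVec v (star v) * Uᴴ,
    ⟨(posSemidef_vecMulVec_self_star v).mul_mul_conjTranspose_same U, ?_⟩, ?_, ?_⟩
  · rw [trace_mul_comm, ← Matrix.mul_assoc, ← star_eq_conjTranspose, hU, Matrix.one_mul,
      trace_vecMulVec, dotProduct_comm, hvv]
  · have hvi : vecMulVec v (star v) * vecMulVec v (star v) = vecMulVec v (star v) := by
      rw [vecMulVec_mul_vecMulVec, hvv, one_smul]
    calc U * vecMulVec v (star v) * Uᴴ * (U * vecMulVec v (star v) * Uᴴ)
        = U * (vecMulVec v (star v) * (star U * U) * vecMulVec v (star v)) * Uᴴ := by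
          simp only [Matrix.mul_assoc, star_eq_conjTranspose]
      _ = U * vecMulVec v (star v) * Uᴴ := by rw [hU, Matrix.mul_one, hvi]
  · rw [← Matrix.mul_assoc, trace_mul_comm, ← Matrix.mul_assoc, ← Matrix.mul_assoc,
      ← star_eq_conjTranspose, hRU, Matrix.trace]
    push_cast
    refine Finset.sum_congr rfl fun i _ => ?_
    rw [diag_apply, diagonal_mul, vecMulVec_apply, hv, mul_comm]
    rfl

end

theorem exists_isIdempotentElem_trace_mul_lt {R : Matrix n n ℂ} (hR : R.PosSemidef)
    (hR0 : R ≠ 0) (hRd : ¬ R.PosDef) {δ : ℝ} (hδ : 0 < δ) :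
    ∃ σ ∈ densityMatrices n, IsIdempotentElem σ ∧
      0 < (R * σ).trace.re ∧ (R * σ).trace.re < δ := by
  classical
  obtain ⟨i, hi⟩ : ∃ i, hR.1.eigenvalues i = 0 := by
    by_contra! h
    exact hRd (hR.1.posDef_iff_eigenvalues_pos.2 fun i =>
      (hR.eigenvalues_nonneg i).lt_of_ne' (h i))
  obtain ⟨j, hj⟩ : ∃ j, 0 < hR.1.eigenvalues j := by
    by_contra! h
    exact hR0 (hR.1.eigenvalues_eq_zero_iff.1 (funext fun i =>
      (h i).antisymm (hR.eigenvalues_nonneg i)))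
  set μ := hR.1.eigenvalues j
  set ε := min 1 (δ / (2 * μ))
  have hε : 0 < ε := by positivity
  have hεδ : ε * μ ≤ δ / 2 :=
    (mul_le_mul_of_nonneg_right (min_le_right _ _) hj.le).trans_eq (by field_simp)
  set w : n → ℝ := (1 - ε) • Pi.single i 1 + ε • Pi.single j 1
  have hsingle (l : n) : (0 : n → ℝ) ≤ Pi.single l 1 := Pi.single_nonneg.2 zero_le_one
  have hw0 (k : n) : 0 ≤ w k := add_nonneg
    (mul_nonneg (sub_nonneg.2 (min_le_left _ _)) (hsingle i k)) (mul_nonneg hε.le (hsingle j k))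
  have hw1 : ∑ k, w k = 1 := by
    simp [w, Finset.sum_add_distrib, ← Finset.mul_sum]
  have hwR : ∑ k, w k * hR.1.eigenvalues k = ε * μ := by
    simp [w, add_mul, Finset.sum_add_distrib, Pi.single_apply, hi, μ]
  obtain ⟨σ, hσ, hσi, htr⟩ := exists_isIdempotentElem_trace_mul_eq hR.1 hw0 hw1
  refine ⟨σ, hσ, hσi, ?_⟩
  rw [htr, Complex.ofReal_re, hwR]
  exact ⟨by positivity, by linarith⟩

end DensityMatrices

section Bipartite

variable {A Y : Type*} [Fintype A]

/-- The reduced state of the second subsystem, i.e. the partial trace over the first factor. -/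
def marginal (ρ : Matrix (A × Y) (A × Y) ℂ) : Matrix Y Y ℂ :=
  ∑ x, ρ.submatrix (Prod.mk x) (Prod.mk x)

theorem posSemidef_marginal {ρ : Matrix (A × Y) (A × Y) ℂ} (hρ : ρ.PosSemidef) :
    (marginal ρ).PosSemidef :=
  posSemidef_sum _ fun x _ => hρ.submatrix (Prod.mk x)

variable [Fintype Y]

theorem marginal_mem_densityMatrices {ρ : Matrix (A × Y) (A × Y) ℂ}
    (hρ : ρ ∈ densityMatrices (A × Y)) : marginal ρ ∈ densityMatrices Y := by
  refine ⟨posSemidef_marginal hρ.1, ?_⟩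
  rw [← hρ.2, marginal, trace_sum]
  simp only [Matrix.trace, diag_apply, submatrix_apply, Fintype.sum_prod_type]

variable [DecidableEq A]

theorem trace_mul_one_kronecker (ρ : Matrix (A × Y) (A × Y) ℂ) (N : Matrix Y Y ℂ) :
    (ρ * (1 ⊗ₖ N)).trace = (marginal ρ * N).trace := by
  rw [marginal, Matrix.sum_mul, trace_sum]
  simp [Matrix.trace, Matrix.mul_apply, Fintype.sum_prod_type, Matrix.one_apply]

variable [DecidableEq Y]

theorem herPow_eq_cfc {σ : Matrix Y Y ℂ} (hσ : σ.IsHermitian) (r : ℝ) :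
    herPow σ hσ r = cfc (fun x : ℝ => x ^ r) σ := by
  rw [hσ.cfc_eq, IsHermitian.cfc, Unitary.conjStarAlgAut_apply]
  rfl

theorem one_kronecker_cfc {σ : Matrix Y Y ℂ} (hσ : σ.IsHermitian) (f : ℝ → ℝ) :
    (1 : Matrix A A ℂ) ⊗ₖ cfc f σ = cfc f ((1 : Matrix A A ℂ) ⊗ₖ σ) := by
  let φ : Matrix Y Y ℂ →⋆ₐ[ℂ] Matrix (A × Y) (A × Y) ℂ :=
    { toFun := fun M => (1 : Matrix A A ℂ) ⊗ₖ M
      map_one' := one_kronecker_one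
      map_mul' := fun M N => by rw [← mul_kronecker_mul, Matrix.one_mul]
      map_zero' := kronecker_zero _
      map_add' := kronecker_add _
      commutes' := fun c => by
        simp only [Algebra.algebraMap_eq_smul_one, kronecker_smul, one_kronecker_one]
      map_star' := fun M => by
        simp only [star_eq_conjTranspose, conjTranspose_kronecker, conjTranspose_one] }
  have hφ : Continuous φ := φ.toLinearMap.continuous_of_finiteDimensional
  exact φ.map_cfc f σ (finite_real_spectrum.continuousOn f) hφ hσ.isSelfAdjoint
    (hσ.isSelfAdjoint.map φ)

theorem condRenyi_eq_neg_iInf (α : ℝ) (ρ : Matrix (A × Y) (A × Y) ℂ) :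
    condRenyi α ρ = -⨅ σ : densityMatrices Y, sandwichedDiv α ρ (1 ⊗ₖ σ) := by
  rw [condRenyi, iInf]
  congr 2
  ext c
  constructor
  · rintro ⟨σ, hσ, h1, rfl⟩
    refine ⟨⟨σ, hσ, h1⟩, ?_⟩
    simp only [herPow_eq_cfc, one_kronecker_cfc hσ.1]
    rfl
  · rintro ⟨⟨σ, hσ, h1⟩, rfl⟩
    refine ⟨σ, hσ, h1, ?_⟩
    simp only [herPow_eq_cfc, one_kronecker_cfc hσ.1]
    rfl

theorem sandwichedNorm_one_kronecker_le {p p' : ℝ} (hp : p.HolderConjugate p')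
    {ρ : Matrix (A × Y) (A × Y) ℂ} (hρ : ρ.PosSemidef) {σ : Matrix Y Y ℂ} (hσ : σ.PosSemidef) :
    sandwichedNorm p ρ (1 ⊗ₖ σ) ≤
      (marginal ρ * cfc (fun x : ℝ => x ^ (-p'⁻¹)) σ).trace.re := by
  rw [← trace_mul_one_kronecker, one_kronecker_cfc hσ.1]
  exact sandwichedNorm_le_re_trace hp hρ (PosSemidef.one.kronecker hσ)

theorem re_trace_marginal_mul_le {p p' : ℝ} (hp : p.HolderConjugate p')
    {ρ : Matrix (A × Y) (A × Y) ℂ} (hρ : ρ.PosSemidef) {σ : Matrix Y Y ℂ} (hσ : σ.PosSemidef) :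
    (marginal ρ * cfc (fun x : ℝ => x ^ (-p'⁻¹)) σ).trace.re ≤
      Fintype.card (A × Y) * sandwichedNorm p ρ (1 ⊗ₖ σ) := by
  rw [← trace_mul_one_kronecker, one_kronecker_cfc hσ.1]
  exact re_trace_le_card_mul_sandwichedNorm hp hρ (PosSemidef.one.kronecker hσ)

theorem exists_pos_le_sandwichedNorm [Nonempty A] [Nonempty Y] {p p' : ℝ}
    (hp : p.HolderConjugate p') {ρ : Matrix (A × Y) (A × Y) ℂ} (hρ : ρ.PosSemidef)
    (hR : (marginal ρ).PosDef) :
    ∃ l > 0, ∀ σ ∈ densityMatrices Y, l ≤ sandwichedNorm p ρ (1 ⊗ₖ σ) := by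
  obtain ⟨l, hl, hle⟩ := exists_pos_mul_re_trace_le hR
  have hcard : (0 : ℝ) < Fintype.card (A × Y) := Nat.cast_pos.2 Fintype.card_pos
  refine ⟨l / Fintype.card (A × Y), div_pos hl hcard, fun σ hσ => (div_le_iff₀' hcard).2 ?_⟩
  calc l ≤ l * (cfc (fun x : ℝ => x ^ (-p'⁻¹)) σ).trace.re :=
        le_mul_of_one_le_right hl.le
          (one_le_re_trace_cfc_rpow hσ (neg_nonpos.2 hp.symm.inv_nonneg))
    _ ≤ (marginal ρ * cfc (fun x : ℝ => x ^ (-p'⁻¹)) σ).trace.re :=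
        hle _ (posSemidef_cfc_rpow hσ.1 _)
    _ ≤ Fintype.card (A × Y) * sandwichedNorm p ρ (1 ⊗ₖ σ) :=
        re_trace_marginal_mul_le hp hρ hσ.1

theorem exists_sandwichedNorm_lt {p p' : ℝ} (hp : p.HolderConjugate p')
    {ρ : Matrix (A × Y) (A × Y) ℂ} (hρ : ρ.PosSemidef)
    (hR0 : marginal ρ ≠ 0) (hR : ¬ (marginal ρ).PosDef) {δ : ℝ} (hδ : 0 < δ) :
    ∃ σ ∈ densityMatrices Y, 0 < sandwichedNorm p ρ (1 ⊗ₖ σ) ∧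
      sandwichedNorm p ρ (1 ⊗ₖ σ) < δ := by
  obtain ⟨σ, hσ, hσi, hpos, hlt⟩ :=
    exists_isIdempotentElem_trace_mul_lt (posSemidef_marginal hρ) hR0 hR hδ
  have hpow : cfc (fun x : ℝ => x ^ (-p'⁻¹)) σ = σ :=
    cfc_rpow_of_isIdempotentElem hσ.1.1 hσi (neg_ne_zero.2 hp.symm.inv_ne_zero)
  have hle := sandwichedNorm_one_kronecker_le hp hρ hσ.1
  have hge := re_trace_marginal_mul_le hp hρ hσ.1
  rw [hpow] at hle hge
  exact ⟨σ, hσ, pos_of_mul_pos_right (hpos.trans_le hge) (Nat.cast_nonneg _), hle.trans_lt hlt⟩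

theorem bddBelow_range_sandwichedDiv [Nonempty A] [Nonempty Y] {α : ℝ} (hα : 1 < α)
    {ρ : Matrix (A × Y) (A × Y) ℂ} (hρ : ρ.PosSemidef) (hR : (marginal ρ).PosDef) :
    BddBelow (Set.range fun σ : densityMatrices Y => sandwichedDiv α ρ (1 ⊗ₖ σ)) := by
  have hα' := Real.HolderConjugate.conjExponent hα
  obtain ⟨l, hl, hle⟩ := exists_pos_le_sandwichedNorm hα' hρ hR
  refine ⟨α.conjExponent * Real.log l, ?_⟩
  rintro _ ⟨σ, rfl⟩
  exact mul_le_mul_of_nonneg_left (Real.log_le_log hl (hle σ σ.2)) hα'.symm.nonneg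

theorem not_bddBelow_range_sandwichedDiv {α : ℝ} (hα : 1 < α) {ρ : Matrix (A × Y) (A × Y) ℂ}
    (hρ : ρ.PosSemidef) (hR0 : marginal ρ ≠ 0) (hR : ¬ (marginal ρ).PosDef) :
    ¬ BddBelow (Set.range fun σ : densityMatrices Y => sandwichedDiv α ρ (1 ⊗ₖ σ)) := by
  have hα' := Real.HolderConjugate.conjExponent hα
  rintro ⟨b, hb⟩
  obtain ⟨σ, hσ, hpos, hlt⟩ := exists_sandwichedNorm_lt hα' hρ hR0 hR
    (Real.exp_pos (b / α.conjExponent))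
  have hlog : Real.log (sandwichedNorm α ρ (1 ⊗ₖ σ)) < b / α.conjExponent :=
    (Real.log_lt_iff_lt_exp hpos).2 hlt
  exact (hb ⟨⟨σ, hσ⟩, rfl⟩).not_gt ((lt_div_iff₀' hα'.symm.pos).1 hlog)

theorem stmt8_general {α β : ℝ} (hβ : 1 < β) (hβα : β ≤ α) {ρ : Matrix (A × Y) (A × Y) ℂ}
    (hρ : ρ.PosSemidef) (hρ1 : ρ.trace = 1) : condRenyi α ρ ≤ condRenyi β ρ := by
  have hα : 1 < α := hβ.trans_le hβα
  have hmarg := marginal_mem_densityMatrices ⟨hρ, hρ1⟩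
  have hR0 : marginal ρ ≠ 0 := fun h => by simpa [h] using hmarg.2
  rw [condRenyi_eq_neg_iInf, condRenyi_eq_neg_iInf, neg_le_neg_iff]
  by_cases hR : (marginal ρ).PosDef
  · have hne : Nonempty (A × Y) := by
      by_contra h
      rw [not_nonempty_iff] at h
      simp [Matrix.trace] at hρ1
    obtain ⟨_, _⟩ := nonempty_prod.1 hne
    obtain ⟨l, hl, hle⟩ := exists_pos_le_sandwichedNorm (.conjExponent hβ) hρ hR
    exact ciInf_mono (bddBelow_range_sandwichedDiv hβ hρ hR) fun σ =>
      sandwichedDiv_mono hβ hβα hρ hρ1 (PosSemidef.one.kronecker σ.2.1) (hl.trans_le (hle σ σ.2))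
  -- Pure states nearly orthogonal to the range of a singular marginal make both sets of values
  -- unbounded below, so that both infima take the junk value `0`.
  · rw [Real.iInf_of_not_bddBelow (not_bddBelow_range_sandwichedDiv hα hρ hR0 hR),
      Real.iInf_of_not_bddBelow (not_bddBelow_range_sandwichedDiv hβ hρ hR0 hR)]

end Bipartite

/-- the sandwiched Rényi conditional entropy is monotone non-increasing in `α`:
for `1 < β ≤ α`, `H_α(X|Y)_ρ ≤ H_β(X|Y)_ρ`. -/
theorem stmt8 {dX dY : ℕ} (α β : ℝ) (hβ : 1 < β) (hβα : β ≤ α)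
    (ρ : Matrix (Fin dX × Fin dY) (Fin dX × Fin dY) ℂ)
    (hρ : ρ.PosSemidef) (hρ1 : ρ.trace = 1) :
    condRenyi α ρ ≤ condRenyi β ρ :=
  stmt8_general hβ hβα hρ hρ1
end
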